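/- Let μ and ν be Borel probability measures on [0,1]^r. Let I = ∏_{i=1}^r [a_i, b_i] ⊆ [0,1]^r with a_i < b_i for all i, and let ι : [0,1]^r → I be the canonical affine bijection w ↦ (a_i + w_i(b_i − a_i))_i. Suppose the restriction of μ to I equals μ(I) times the uniform probability measure on I (normalized Lebesgue measure on I). Define the nested measure nest(ν, μ, I) = μ|_{[0,1]^r ∖ I} + μ(I)·ι_*ν. Let J ⊆ {1,…,r} with |J| = k and suppose the pushforward of ν under the coordinate projection π_J : u ↦ (u_i)_{i∈J} is Lebesgue measure on [0,1]^J. Then (π_J)_* nest(ν, μ, I) = (π_J)_* μ. In particular, if μ and ν are copulas of order k, then so is nest(ν, μ, I). -/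

import Mathlib

open MeasureTheory Filter
open scoped ENNReal BigOperators

noncomputable section

/-- The unit cube `[0,1]^r`. -/
def cube (r : ℕ) : Set (Fin r → ℝ) := Set.univ.pi fun _ => Set.Icc (0:ℝ) 1

/-- A Borel probability measure on `[0,1]^r` is a copula of order `k` if its pushforward
under the coordinate projection to any `k`-element set `J` of coordinates is the Lebesgue
measure on `[0,1]^J`. -/
def IsCopulaOfOrder (r k : ℕ) (c : Measure (Fin r → ℝ)) : Prop :=
  IsProbabilityMeasure c ∧ c (cube r) = 1 ∧
    ∀ J : Finset (Fin r), J.card = k →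
      c.map (fun v (i : J) => v i.1) =
        Measure.pi fun _ : J => volume.restrict (Set.Icc (0:ℝ) 1)

/-- `liminf_{s→0+} c_J(s) / s^τ` (in `ℝ≥0∞`), where
`c_J(s) = c {u ∈ [0,1]^r : u_i ≤ s ∀ i ∈ J}`. -/
def tailLiminf (r : ℕ) (c : Measure (Fin r → ℝ)) (J : Finset (Fin r)) (τ : ℝ) : ℝ≥0∞ :=
  Filter.liminf (fun s : ℝ => c ({v | ∀ i ∈ J, v i ≤ s} ∩ cube r) / ENNReal.ofReal (s ^ τ))
    (nhdsWithin 0 (Set.Ioi 0))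

/-- The tail degree `td_J(c)`: the infimum of the exponents `τ ≥ 0` with
`liminf_{s→0+} c_J(s)/s^τ = ∞` (equal to `∞` if there is no such exponent). -/
def tailDeg (r : ℕ) (c : Measure (Fin r → ℝ)) (J : Finset (Fin r)) : ℝ≥0∞ :=
  sInf {τ : ℝ≥0∞ | tailLiminf r c J τ.toReal = ⊤}

/-- The tail coefficient `tc_J(c) = liminf_{s→0+} c_J(s)/s^{td_J(c)}`. -/
def tailCoef (r : ℕ) (c : Measure (Fin r → ℝ)) (J : Finset (Fin r)) : ℝ≥0∞ :=
  tailLiminf r c J (tailDeg r c J).toReal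

/-- The box `I = ∏_i [a_i, b_i]`. -/
def boxI (r : ℕ) (a b : Fin r → ℝ) : Set (Fin r → ℝ) :=
  Set.univ.pi fun i => Set.Icc (a i) (b i)

/-- The canonical affine map `ι : [0,1]^r → I`, `w ↦ (a_i + w_i (b_i − a_i))_i`. -/
def iota (r : ℕ) (a b : Fin r → ℝ) : (Fin r → ℝ) → (Fin r → ℝ) :=
  fun w i => a i + w i * (b i - a i)

/-- The nested measure `nest(ν, μ, I) = μ|_{[0,1]^r ∖ I} + μ(I)·ι_*ν`. -/
def nestM (r : ℕ) (ν μ : Measure (Fin r → ℝ)) (a b : Fin r → ℝ) : Measure (Fin r → ℝ) :=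
  μ.restrict (cube r \ boxI r a b) + (μ (boxI r a b)) • ν.map (iota r a b)

/-- One coordinate of `iota`, applied to the uniform measure on `[0,1]`. -/
def etaM (a b : ℝ) : Measure ℝ :=
  (volume.restrict (Set.Icc (0:ℝ) 1)).map (fun x => a + x * (b - a))

instance unitProb : IsProbabilityMeasure (volume.restrict (Set.Icc (0:ℝ) 1)) :=
  ⟨by simp⟩

instance etaProb (a b : ℝ) : IsProbabilityMeasure (etaM a b) := by
  unfold etaM
  exact Measure.isProbabilityMeasure_map (by fun_prop)

lemma restrict_eq_smul_eta {a b : ℝ} (h : a < b) :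
    volume.restrict (Set.Icc a b) = ENNReal.ofReal (b - a) • etaM a b := by
  have hc : 0 < b - a := sub_pos.2 h
  have h1 : (volume : Measure ℝ) =
      ENNReal.ofReal (b - a) • volume.map (fun x : ℝ => a + x * (b - a)) := by
    have e : (fun x : ℝ => a + x * (b - a)) = (fun y => a + y) ∘ (fun x => x * (b - a)) := rfl
    rw [e, ← Measure.map_map (by fun_prop) (by fun_prop), ← Measure.map_smul]
    have := Real.smul_map_volume_mul_right hc.ne'
    rw [abs_of_pos hc] at this
    rw [this]
    exact (map_add_left_eq_self volume a).symm
  have hp : (fun x : ℝ => a + x * (b - a)) ⁻¹' Set.Icc a b = Set.Icc 0 1 := by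
    ext x
    simp only [Set.mem_preimage, Set.mem_Icc]
    constructor
    · rintro ⟨h1, h2⟩
      constructor <;> nlinarith
    · rintro ⟨h1, h2⟩
      constructor <;> nlinarith
  conv_lhs => rw [h1]
  rw [Measure.restrict_smul, Measure.restrict_map (by fun_prop) measurableSet_Icc, hp]
  rfl

lemma volume_restrict_box {r : ℕ} {a b : Fin r → ℝ} (hab : ∀ i, a i < b i) :
    volume.restrict (boxI r a b) =
      volume (boxI r a b) • Measure.pi (fun i => etaM (a i) (b i)) := by
  have hv : volume (boxI r a b) = ∏ i, ENNReal.ofReal (b i - a i) := by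
    simp [boxI, Real.volume_Icc_pi]
  rw [hv]
  unfold boxI
  rw [volume_pi, Measure.restrict_pi_pi]
  apply Measure.pi_eq
  intro s hs
  simp only [Measure.smul_apply, smul_eq_mul, Measure.pi_pi]
  rw [← Finset.prod_mul_distrib]
  refine Finset.prod_congr rfl fun i _ => ?_
  rw [restrict_eq_smul_eta (hab i), Measure.smul_apply, smul_eq_mul]

lemma restrict_box_eq {r : ℕ} {μ : Measure (Fin r → ℝ)} {a b : Fin r → ℝ}
    (hab : ∀ i, a i < b i)
    (hunif : μ.restrict (boxI r a b) =
      (μ (boxI r a b) / volume (boxI r a b)) • volume.restrict (boxI r a b)) :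
    μ.restrict (boxI r a b) = μ (boxI r a b) • Measure.pi (fun i => etaM (a i) (b i)) := by
  have hv : volume (boxI r a b) = ∏ i, ENNReal.ofReal (b i - a i) := by
    simp [boxI, Real.volume_Icc_pi]
  have h0 : volume (boxI r a b) ≠ 0 := by
    rw [hv, Finset.prod_ne_zero_iff]
    intro i _
    simpa using hab i
  have ht : volume (boxI r a b) ≠ ⊤ := by
    rw [hv]
    exact ENNReal.prod_ne_top fun i _ => ENNReal.ofReal_ne_top
  conv_lhs => rw [hunif, volume_restrict_box hab, smul_smul, ENNReal.div_mul_cancel h0 ht]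

lemma measurableSet_box (r : ℕ) (a b : Fin r → ℝ) : MeasurableSet (boxI r a b) :=
  MeasurableSet.univ_pi fun _ => measurableSet_Icc

lemma measurableSet_cube (r : ℕ) : MeasurableSet (cube r) :=
  MeasurableSet.univ_pi fun _ => measurableSet_Icc

lemma measurable_iota (r : ℕ) (a b : Fin r → ℝ) : Measurable (iota r a b) := by
  unfold iota
  fun_prop

lemma proj_iota {r : ℕ} {ν : Measure (Fin r → ℝ)} (a b : Fin r → ℝ) (J : Finset (Fin r))
    (hJ : ν.map (fun v (i : J) => v i.1) =
        Measure.pi (fun _ : J => volume.restrict (Set.Icc (0:ℝ) 1))) :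
    (ν.map (iota r a b)).map (fun v (i : J) => v i.1) =
      (Measure.pi (fun i => etaM (a i) (b i))).map (fun v (i : J) => v i.1) := by
  have h2 : (Measure.pi (fun i => etaM (a i) (b i))).map (fun v (i : J) => v i.1) =
      Measure.pi (fun i : J => etaM (a i) (b i)) := by
    rw [← Measure.infinitePi_eq_pi]
    exact Measure.infinitePi_map_restrict (fun i => etaM (a i) (b i)) (I := J)
  rw [h2, Measure.map_map (by fun_prop) (measurable_iota r a b)]
  have e : (fun (v : Fin r → ℝ) (i : J) => v i.1) ∘ iota r a b =
      (fun (w : J → ℝ) (i : J) => a i + w i * (b i - a i)) ∘ (fun v (i : J) => v i.1) := rfl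
  rw [e, ← Measure.map_map (by fun_prop) (by fun_prop), hJ]
  have : ∀ i : J, SigmaFinite ((volume.restrict (Set.Icc (0:ℝ) 1)).map
      (fun x => a i + x * (b i - a i))) := fun i =>
    inferInstanceAs (SigmaFinite (etaM (a i) (b i)))
  exact Measure.pi_map_pi (μ := fun _ : J => volume.restrict (Set.Icc (0:ℝ) 1))
    (f := fun (i : J) x => a i + x * (b i - a i)) (fun i => by fun_prop)

lemma iota_cube {r : ℕ} {a b : Fin r → ℝ} (hab : ∀ i, a i < b i) :
    cube r ⊆ iota r a b ⁻¹' boxI r a b := by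
  intro w hw i _
  have h := hw i trivial
  have := hab i
  simp only [Set.mem_Icc, iota] at h ⊢
  constructor <;> nlinarith [h.1, h.2]

lemma restrict_diff_add {r : ℕ} {μ : Measure (Fin r → ℝ)} [IsProbabilityMeasure μ]
    (hμc : μ (cube r) = 1) {a b : Fin r → ℝ} (hI : boxI r a b ⊆ cube r) :
    μ.restrict (cube r \ boxI r a b) + μ.restrict (boxI r a b) = μ := by
  rw [← Measure.restrict_union Set.disjoint_sdiff_left (measurableSet_box r a b),
    Set.sdiff_union_of_subset hI]
  apply Measure.restrict_eq_self_of_ae_mem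
  exact (prob_compl_eq_zero_iff (measurableSet_cube r)).2 hμc

theorem stmt_11 (r k : ℕ) (hk : 1 ≤ k) (hkr : k ≤ r)
    (μ ν : Measure (Fin r → ℝ))
    (hμ : IsProbabilityMeasure μ) (hμc : μ (cube r) = 1)
    (hν : IsProbabilityMeasure ν) (hνc : ν (cube r) = 1)
    (a b : Fin r → ℝ) (hab : ∀ i, a i < b i) (hI : boxI r a b ⊆ cube r)
    -- `μ` restricted to `I` is `μ(I)` times the uniform probability measure on `I`
    (hunif : μ.restrict (boxI r a b) =
      (μ (boxI r a b) / volume (boxI r a b)) • volume.restrict (boxI r a b)) :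
    (∀ J : Finset (Fin r), J.card = k →
      ν.map (fun v (i : J) => v i.1) =
        Measure.pi (fun _ : J => volume.restrict (Set.Icc (0:ℝ) 1)) →
      (nestM r ν μ a b).map (fun v (i : J) => v i.1) = μ.map (fun v (i : J) => v i.1)) ∧
    (IsCopulaOfOrder r k μ → IsCopulaOfOrder r k ν →
      IsCopulaOfOrder r k (nestM r ν μ a b)) := by
  have key : ∀ J : Finset (Fin r), J.card = k →
      ν.map (fun v (i : J) => v i.1) =
        Measure.pi (fun _ : J => volume.restrict (Set.Icc (0:ℝ) 1)) →
      (nestM r ν μ a b).map (fun v (i : J) => v i.1) = μ.map (fun v (i : J) => v i.1) := by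
    intro J _ hJ
    have hm : Measurable (fun (v : Fin r → ℝ) (i : J) => v i.1) := by fun_prop
    conv_rhs => rw [← restrict_diff_add hμc hI, restrict_box_eq hab hunif]
    unfold nestM
    rw [Measure.map_add _ _ hm, Measure.map_add _ _ hm, Measure.map_smul, Measure.map_smul,
      proj_iota a b J hJ]
  refine ⟨key, fun h1 h2 => ?_⟩
  have hsum : μ (cube r \ boxI r a b) + μ (boxI r a b) = 1 := by
    have := congrArg (fun m => m Set.univ) (restrict_diff_add hμc hI)
    simpa using this
  have hpre : ν (iota r a b ⁻¹' cube r) = 1 := by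
    refine le_antisymm prob_le_one ?_
    rw [← hνc]
    exact measure_mono ((iota_cube hab).trans (Set.preimage_mono hI))
  refine ⟨⟨?_⟩, ?_, fun J hJ => ?_⟩
  · simp only [nestM, Measure.add_apply, Measure.smul_apply, smul_eq_mul,
      Measure.restrict_apply_univ, Measure.map_apply (measurable_iota r a b) MeasurableSet.univ,
      Set.preimage_univ, measure_univ, mul_one, hsum]
  · simp only [nestM, Measure.add_apply, Measure.smul_apply, smul_eq_mul,
      Measure.restrict_apply (measurableSet_cube r),
      Measure.map_apply (measurable_iota r a b) (measurableSet_cube r), hpre, mul_one,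
      Set.inter_eq_right.2 (Set.sdiff_subset : cube r \ boxI r a b ⊆ cube r), hsum]
  · rw [key J hJ (h2.2.2 J hJ), h1.2.2 J hJ]
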